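/- The composite AW ∘ sh equals the identity on N(A)⊗N(B) for any simplicial k-modules A and B (using normalized chains). -/

import Mathlib

open scoped TensorProduct Classical

/-- A simplicial `K`-module, given by `K`-modules `X n` together with face maps
`d n i : X (n+1) → X n` and degeneracy maps `s n i : X n → X (n+1)` (indices are natural
numbers; only indices in the simplicial range are constrained) satisfying the simplicial
identities. -/
structure SimplicialModule (K : Type*) [CommRing K] where
  X : ℕ → Type*
  [acg : ∀ n, AddCommGroup (X n)]
  [mod : ∀ n, Module K (X n)]
  d : ∀ n, ℕ → (X (n + 1) →ₗ[K] X n)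
  s : ∀ n, ℕ → (X n →ₗ[K] X (n + 1))
  d_d : ∀ n i j, i < j → j ≤ n + 2 →
    (d n i).comp (d (n + 1) j) = (d n (j - 1)).comp (d (n + 1) i)
  d_s_lt : ∀ n i j, i < j → j ≤ n + 1 →
    (d (n + 1) i).comp (s (n + 1) j) = (s n (j - 1)).comp (d n i)
  d_s_self : ∀ n j, j ≤ n →
    (d n j).comp (s n j) = LinearMap.id ∧ (d n (j + 1)).comp (s n j) = LinearMap.id
  d_s_gt : ∀ n i j, j + 1 < i → i ≤ n + 2 →
    (d (n + 1) i).comp (s (n + 1) j) = (s n j).comp (d n (i - 1))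
  s_s : ∀ n i j, i ≤ j → j ≤ n →
    (s (n + 1) i).comp (s n j) = (s (n + 1) (j + 1)).comp (s n i)

attribute [instance] SimplicialModule.acg SimplicialModule.mod

variable {K : Type*} [CommRing K]

/-- Transport along an equality of degrees. -/
def castE (S : SimplicialModule K) {a b : ℕ} (h : a = b) : S.X a → S.X b := fun x => h ▸ x

/-- `sIter S f m n : X n → X (n+m)` applies degeneracies `s_{f 0}, s_{f 1}, …, s_{f (m-1)}`
in this order (so `s_{f 0}` is applied first, at degree `n`). -/
def sIter (S : SimplicialModule K) (f : ℕ → ℕ) : ∀ (m n : ℕ), S.X n → S.X (n + m)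
  | 0, _, x => x
  | m + 1, n, x => S.s (n + m) (f m) (sIter S f m n x)

/-- `σ` is a `(p,q)`-shuffle (0-indexed). -/
def IsShuffle (p q : ℕ) (σ : Equiv.Perm (Fin (p + q))) : Prop :=
  (∀ i j : Fin (p + q), (i : ℕ) < j → (j : ℕ) < p → σ i < σ j) ∧
  (∀ i j : Fin (p + q), (i : ℕ) < j → p ≤ (i : ℕ) → σ i < σ j)

/-- A permutation of `Fin m` as a function `ℕ → ℕ` (junk value `0` out of range). -/
def permFun {m : ℕ} (σ : Equiv.Perm (Fin m)) : ℕ → ℕ :=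
  fun t => if h : t < m then (σ ⟨t, h⟩ : ℕ) else 0


/-- `dl S c n : X (n+c) → X n`, the composite `d̃_n^{n+c} = d_{n+1} ∘ ⋯ ∘ d_{n+c}` of
iterated last-face maps. -/
def dl (S : SimplicialModule K) : ∀ (c n : ℕ), S.X (n + c) → S.X n
  | 0, _, x => x
  | c + 1, n, x => dl S c n (S.d (n + c) (n + c + 1) x)

/-- `d0 S t n : X (n+t) → X n`, the `t`-fold iterate `d_0^t` of the zeroth face map. -/
def d0 (S : SimplicialModule K) : ∀ (t n : ℕ), S.X (n + t) → S.X n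
  | 0, _, x => x
  | t + 1, n, x => d0 S t n (S.d (n + t) 0 x)

/-- The submodule of degenerate elements: in positive degree the span of the images of
the degeneracy maps, in degree `0` the zero submodule.  The normalized Moore complex has
`N(A)_n = A_n / degSub A n`. -/
def degSub (S : SimplicialModule K) : ∀ n, Submodule K (S.X n)
  | 0 => ⊥
  | m + 1 => ⨆ i ∈ Finset.range (m + 1), LinearMap.range (S.s m i)

/-- The `(i,j)`-component (for `i + j = p + q`) of `AW(sh(a ⊗ b))` in `A_i ⊗ B_j`, for
`a ∈ A_p`, `b ∈ B_q`: `AW` applied in degree `p+q` to the shuffle sum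
`sh(a ⊗ b) = Σ_σ sgn(σ) (s…a) ⊗ (s…b)`. -/
noncomputable def awShComp (A B : SimplicialModule K) (p q i j : ℕ)
    (a : A.X p) (b : B.X q) (h1 : p + q = i + j) (h2 : q + p = j + i) :
    TensorProduct K (A.X i) (B.X j) :=
  ∑ σ : Equiv.Perm (Fin (p + q)),
    if IsShuffle p q σ then
      ((Equiv.Perm.sign σ : ℤˣ) : ℤ) •
        ((dl A j i (castE A h1 (sIter A (fun t => permFun σ (p + t)) q p a))) ⊗ₜ[K]
          (d0 B i j (castE B h2 (sIter B (permFun σ) p q b))))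
    else 0

/-- `IsDegen S t n x`: the element `x : X n` is in the image of the degeneracy `s_t`, with `t` in
the simplicial range. -/
inductive IsDegen (S : SimplicialModule K) : ℕ → ∀ n, S.X n → Prop
  | mk (n t : ℕ) (y : S.X n) (ht : t ≤ n) : IsDegen S t (n + 1) (S.s n t y)

namespace IsDegen

variable {S : SimplicialModule K} {t n : ℕ}

lemma mem_degSub {x : S.X n} (h : IsDegen S t n x) : x ∈ degSub S n := by
  cases h with
  | mk n _ y ht =>
    exact Submodule.mem_iSup_of_mem t (Submodule.mem_iSup_of_mem
      (Finset.mem_range.2 (Nat.lt_succ_of_le ht)) ⟨y, rfl⟩)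

lemma castE {a b : ℕ} {x : S.X a} (hab : a = b) (h : IsDegen S t a x) :
    IsDegen S t b (castE S hab x) := by
  subst hab
  exact h

lemma d_last {x : S.X (n + 1)} (h : IsDegen S t (n + 1) x) (ht : t < n) :
    IsDegen S t n (S.d n (n + 1) x) := by
  cases h with
  | mk _ _ y _ =>
    obtain ⟨m, rfl⟩ : ∃ m, n = m + 1 := ⟨n - 1, by omega⟩
    have := LinearMap.congr_fun (S.d_s_gt m (m + 2) t (by omega) le_rfl) y
    simp only [LinearMap.comp_apply] at this
    rw [this]
    exact ⟨m, t, _, by omega⟩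

lemma d_zero {x : S.X (n + 1)} (h : IsDegen S (t + 1) (n + 1) x) :
    IsDegen S t n (S.d n 0 x) := by
  cases h with
  | mk _ _ y hn =>
    obtain ⟨m, rfl⟩ : ∃ m, n = m + 1 := ⟨n - 1, by omega⟩
    have := LinearMap.congr_fun (S.d_s_lt m 0 (t + 1) (by omega) hn) y
    simp only [LinearMap.comp_apply] at this
    rw [this]
    exact ⟨m, t, _, by omega⟩

lemma s {x : S.X n} {u : ℕ} (h : IsDegen S t n x) (htu : t < u) (hu : u ≤ n) :
    IsDegen S t (n + 1) (S.s n u x) := by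
  cases h with
  | mk n _ y hn =>
    obtain ⟨v, rfl⟩ : ∃ v, u = v + 1 := ⟨u - 1, by omega⟩
    have := LinearMap.congr_fun (S.s_s n t v (by omega) (by omega)) y
    simp only [LinearMap.comp_apply] at this
    rw [← this]
    exact ⟨n + 1, t, _, by omega⟩

lemma dl : ∀ {c : ℕ} {x : S.X (n + c)}, IsDegen S t (n + c) x → t < n → IsDegen S t n (dl S c n x)
  | 0, _, h, _ => h
  | c + 1, _, h, ht => dl (c := c) (d_last (n := n + c) h (by omega)) ht

lemma d0 : ∀ {c : ℕ} {x : S.X (n + c)}, IsDegen S (t + c) (n + c) x → IsDegen S t n (d0 S c n x)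
  | 0, _, h => h
  | c + 1, _, h => d0 (c := c) (d_zero (n := n + c) h)

lemma sIter (f : ℕ → ℕ) (x : S.X n) : ∀ m : ℕ,
    (∀ k, 0 < k → k < m + 1 → f 0 < f k) → (∀ k < m + 1, f k ≤ n + k) →
      IsDegen S (f 0) (n + (m + 1)) (sIter S f (m + 1) n x)
  | 0, _, hle => ⟨n, f 0, x, hle 0 one_pos⟩
  | m + 1, hlt, hle =>
    (sIter f x m (fun k h0 hk => hlt k h0 (by omega)) (fun k hk => hle k (by omega))).s
      (hlt (m + 1) (by omega) (by omega)) (hle (m + 1) (by omega))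

end IsDegen

lemma dl_sIter (S : SimplicialModule K) (f : ℕ → ℕ) (n : ℕ) (x : S.X n) :
    ∀ m : ℕ, (∀ k < m, f k = n + k) → dl S m n (sIter S f m n x) = x
  | 0, _ => rfl
  | m + 1, h => by
    have := LinearMap.congr_fun (S.d_s_self (n + m) (n + m) le_rfl).2 (sIter S f m n x)
    simp only [LinearMap.comp_apply, LinearMap.id_apply] at this
    rw [dl, sIter, h m (by omega), this]
    exact dl_sIter S f n x m fun k hk => h k (by omega)

lemma d_zero_sIter (S : SimplicialModule K) (f : ℕ → ℕ) (n : ℕ) (x : S.X n) :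
    ∀ m : ℕ, (∀ k < m + 1, f k = k) →
      S.d (n + m) 0 (sIter S f (m + 1) n x) = sIter S f m n x
  | 0, h => by
    have := LinearMap.congr_fun (S.d_s_self n 0 (Nat.zero_le _)).1 x
    change S.d n 0 (S.s n (f 0) x) = x
    rw [h 0 one_pos]
    exact this
  | m + 1, h => by
    have := LinearMap.congr_fun (S.d_s_lt (n + m) 0 (m + 1) (by omega) (by omega))
      (sIter S f (m + 1) n x)
    simp only [LinearMap.comp_apply, Nat.add_sub_cancel] at this
    rw [d_zero_sIter S f n x m fun k hk => h k (by omega)] at this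
    rw [sIter, h (m + 1) (by omega)]
    refine this.trans ?_
    rw [sIter, h m (by omega)]

lemma d0_sIter (S : SimplicialModule K) (f : ℕ → ℕ) (n : ℕ) (x : S.X n) :
    ∀ m : ℕ, (∀ k < m, f k = k) → d0 S m n (sIter S f m n x) = x
  | 0, _ => rfl
  | m + 1, h => by
    rw [d0, d_zero_sIter S f n x m h]
    exact d0_sIter S f n x m fun k hk => h k (by omega)

lemma permFun_of_lt {m t : ℕ} (σ : Equiv.Perm (Fin m)) (h : t < m) :
    permFun σ t = (σ ⟨t, h⟩ : ℕ) := dif_pos h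

lemma permFun_lt {m t : ℕ} (σ : Equiv.Perm (Fin m)) (h : t < m) : permFun σ t < m := by
  rw [permFun_of_lt σ h]
  exact (σ _).2

lemma isShuffle_one (p q : ℕ) : IsShuffle p q 1 :=
  ⟨fun _ _ h _ => h, fun _ _ h _ => h⟩

namespace IsShuffle

variable {p q : ℕ} {σ : Equiv.Perm (Fin (p + q))}

lemma permFun_lt_left (h : IsShuffle p q σ) {k l : ℕ} (hkl : k < l) (hl : l < p) :
    permFun σ k < permFun σ l := by
  rw [permFun_of_lt σ (by omega : k < p + q), permFun_of_lt σ (by omega : l < p + q)]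
  exact h.1 _ _ hkl hl

lemma permFun_lt_right (h : IsShuffle p q σ) {k l : ℕ} (hk : p ≤ k) (hkl : k < l)
    (hl : l < p + q) : permFun σ k < permFun σ l := by
  rw [permFun_of_lt σ (by omega : k < p + q), permFun_of_lt σ hl]
  exact h.2 _ _ hkl hk

lemma permFun_le (h : IsShuffle p q σ) {k : ℕ} (hk : p ≤ k) (hkq : k < p + q) :
    permFun σ k ≤ k := by
  have key : ∀ r, k + r < p + q → permFun σ k + r ≤ permFun σ (k + r) := by
    intro r
    induction r with
    | zero => exact fun _ => le_rfl
    | succ r ih =>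
      intro hr
      have h1 := ih (by omega)
      have h2 := h.permFun_lt_right (k := k + r) (l := k + (r + 1)) (by omega) (by omega) hr
      omega
  have h1 := key (p + q - 1 - k) (by omega)
  have h2 := permFun_lt σ (show k + (p + q - 1 - k) < p + q by omega)
  omega

/-- A shuffle whose first block has values below `i` and whose second block has values at
least `i` is the identity. -/
lemma eq_one_of_separated (h : IsShuffle p q σ) {i : ℕ}
    (hA : 0 < q → i ≤ permFun σ p) (hB : 0 < p → permFun σ (p - 1) < i) : σ = 1 := by
  have hlo : ∀ k < p, permFun σ k < i := fun k hk => by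
    have := hB (by omega)
    rcases (show k ≤ p - 1 by omega).eq_or_lt with rfl | hlt
    · exact this
    · exact (h.permFun_lt_left hlt (by omega)).trans this
  have hhi : ∀ k, p ≤ k → k < p + q → i ≤ permFun σ k := fun k hk hkq => by
    have := hA (by omega)
    rcases hk.eq_or_lt with rfl | hlt
    · exact this
    · exact this.trans (h.permFun_lt_right le_rfl hlt hkq).le
  have hmono : StrictMono σ := fun k l hkl => by
    by_cases hl : (l : ℕ) < p
    · exact h.1 _ _ hkl hl
    by_cases hk : p ≤ (k : ℕ)
    · exact h.2 _ _ hkl hk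
    have h1 := hlo k (by omega)
    have h2 := hhi l (by omega) l.2
    rw [permFun_of_lt σ k.2] at h1
    rw [permFun_of_lt σ l.2] at h2
    exact Fin.lt_def.2 (h1.trans_le h2)
  have := Subsingleton.elim (hmono.orderIsoOfSurjective σ σ.surjective) (OrderIso.refl _)
  ext k
  exact congrArg Fin.val (congrArg (fun e : Fin (p + q) ≃o Fin (p + q) => e k) this)

end IsShuffle

/-- A shuffle term in the component `(i, j)` of `AW(sh(a ⊗ b))` is degenerate unless the shuffle is
the identity and `(i, j) = (p, q)`. -/
lemma aw_shuffle_term_eq_zero (A B : SimplicialModule K) {p q i j : ℕ} (a : A.X p) (b : B.X q)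
    (h1 : p + q = i + j) (h2 : q + p = j + i) {σ : Equiv.Perm (Fin (p + q))}
    (hσ : IsShuffle p q σ) (hne : ¬(i = p ∧ σ = 1)) :
    (degSub A i).mkQ (dl A j i (castE A h1 (sIter A (fun t => permFun σ (p + t)) q p a))) ⊗ₜ[K]
      (degSub B j).mkQ (d0 B i j (castE B h2 (sIter B (permFun σ) p q b))) = 0 := by
  by_cases hA : 0 < q ∧ permFun σ p < i
  · obtain ⟨hq, hi⟩ := hA
    obtain ⟨m, rfl⟩ : ∃ m, q = m + 1 := ⟨q - 1, by omega⟩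
    have hdeg := IsDegen.sIter (fun t => permFun σ (p + t)) a m
      (fun k h0 hk => hσ.permFun_lt_right le_self_add (by omega) (by omega))
      (fun k hk => hσ.permFun_le le_self_add (by omega))
    rw [Submodule.mkQ_apply, (Submodule.Quotient.mk_eq_zero _).2
      ((hdeg.castE h1).dl hi).mem_degSub, TensorProduct.zero_tmul]
  by_cases hB : 0 < p ∧ i ≤ permFun σ (p - 1)
  · obtain ⟨hp, hi⟩ := hB
    obtain ⟨m, rfl⟩ : ∃ m, p = m + 1 := ⟨p - 1, by omega⟩
    obtain ⟨t, ht⟩ := Nat.exists_eq_add_of_le' hi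
    rw [Nat.add_sub_cancel] at ht
    have hdeg : IsDegen B (t + i) (q + (m + 1)) (sIter B (permFun σ) (m + 1) q b) := by
      have hlt := permFun_lt σ (show m < m + 1 + q by omega)
      rw [← ht]
      exact ⟨q + m, _, _, by omega⟩
    rw [Submodule.mkQ_apply (degSub B j), (Submodule.Quotient.mk_eq_zero _).2
      (hdeg.castE h2).d0.mem_degSub, TensorProduct.tmul_zero]
  · obtain rfl : σ = 1 := hσ.eq_one_of_separated (i := i) (by omega) (by omega)
    refine absurd ⟨?_, rfl⟩ hne
    have hp : 0 < q → permFun (1 : Equiv.Perm (Fin (p + q))) p = p :=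
      fun hq => permFun_of_lt 1 (by omega)
    have hp' : 0 < p → permFun (1 : Equiv.Perm (Fin (p + q))) (p - 1) = p - 1 :=
      fun hq => permFun_of_lt 1 (by omega)
    omega

/-- `AW ∘ sh = id` on `N(A) ⊗ N(B)` for the normalized Moore complexes, stated
componentwise: for `a ∈ A_p`, `b ∈ B_q`, every component of `AW(sh(a ⊗ b))` of bidegree
`(i,j) ≠ (p,q)` vanishes in `N(A)_i ⊗ N(B)_j = (A_i/deg) ⊗ (B_j/deg)`, and the
`(p,q)`-component equals the class of `a ⊗ b`. -/
theorem aw_comp_shuffle_eq_id (A B : SimplicialModule K) (p q : ℕ)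
    (a : A.X p) (b : B.X q) :
    (∀ i j : ℕ, ∀ hij : i + j = p + q, ¬(i = p ∧ j = q) →
      TensorProduct.map (degSub A i).mkQ (degSub B j).mkQ
        (awShComp A B p q i j a b (by omega) (by omega)) = 0) ∧
    TensorProduct.map (degSub A p).mkQ (degSub B q).mkQ
        (awShComp A B p q p q a b (by omega) (by omega)) =
      (Submodule.Quotient.mk a) ⊗ₜ[K] (Submodule.Quotient.mk b) := by
  have hmap : ∀ (i j : ℕ) (h1 : p + q = i + j) (h2 : q + p = j + i),
      TensorProduct.map (degSub A i).mkQ (degSub B j).mkQ (awShComp A B p q i j a b h1 h2) =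
        ∑ σ : Equiv.Perm (Fin (p + q)),
          if IsShuffle p q σ then
            ((Equiv.Perm.sign σ : ℤˣ) : ℤ) •
              ((degSub A i).mkQ
                  (dl A j i (castE A h1 (sIter A (fun t => permFun σ (p + t)) q p a))) ⊗ₜ[K]
                (degSub B j).mkQ (d0 B i j (castE B h2 (sIter B (permFun σ) p q b))))
          else 0 := by
    intro i j h1 h2
    rw [awShComp, map_sum]
    refine Finset.sum_congr rfl fun σ _ => ?_
    split_ifs
    · rw [map_zsmul, TensorProduct.map_tmul]
    · exact map_zero _
  refine ⟨fun i j hij hne => ?_, ?_⟩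
  · rw [hmap]
    refine Finset.sum_eq_zero fun σ _ => ?_
    split_ifs with hσ
    · rw [aw_shuffle_term_eq_zero A B a b _ _ hσ (by omega), smul_zero]
    · rfl
  · rw [hmap, Finset.sum_eq_single 1]
    · rw [if_pos (isShuffle_one p q), Equiv.Perm.sign_one, Units.val_one, one_smul]
      have ha := dl_sIter A (fun t => permFun (1 : Equiv.Perm (Fin (p + q))) (p + t)) p a q
        fun k hk => permFun_of_lt 1 (by omega)
      have hb := d0_sIter B (permFun (1 : Equiv.Perm (Fin (p + q)))) q b p
        fun k hk => permFun_of_lt 1 (by omega)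
      exact congrArg₂ (fun x y => (degSub A p).mkQ x ⊗ₜ[K] (degSub B q).mkQ y) ha hb
    · intro σ _ hσ1
      split_ifs with hσ
      · rw [aw_shuffle_term_eq_zero A B a b _ _ hσ fun h => hσ1 h.2, smul_zero]
      · rfl
    · exact fun h => absurd (Finset.mem_univ _) h
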